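/- Let 2 < c < 37/18, set δ = c/2 − 1 + η, and let x be a real number with τ ≤ |x| ≤ K. Let M, N ≥ 1 with MN ≍ X (that is, MN is of exact order X) and M ≫ X^{1 − 72δ/7}, and let (b_n) be complex numbers with |b_n| ≪ 1. Then |Σ_{M < m ≤ 2M} Σ_{N < n ≤ 2N} b_n e(x m^c n^c)| ≪ X^{1−δ}, where the implied constant depends only on c and η. -/

import Mathlib

noncomputable def e (t : ℝ) : ℂ := Complex.exp (2 * Real.pi * Complex.I * t)

/-!
For fixed `n` the sum over `m` has phase `x n ^ c m ^ c`, whose fourth derivative on `(M, 2M]` has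
exact order `Y = |x| (MN) ^ c M⁻⁴`. Van der Corput's fourth derivative test bounds this sum by
`M Y ^ (1/14) + M ^ (3/4) Y ^ (-1/14)`, and the sum over `n` is then estimated trivially. The lower
bound on `M` makes `Y ^ (1/14)` at most of order `X ^ (-δ)`, while `|x| ≥ X ^ (1 - c - η)` together
with `M ≤ MN` makes `M ^ (7/2) Y` at least of order `X ^ (14 δ)`, which settles the second term.

The derivative tests are proved for sequences, with forward differences in place of derivatives.
Order two follows from the Kusmin–Landau inequality after removing the few terms whose first
difference is close to an integer. The Weyl–van der Corput inequality passes from order `k` to order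
`k + 1`, since differencing with step `h` turns a `(k + 1)`-st difference of size `ℓ` into a `k`-th
difference of size `h ℓ`. For the monomial phase the forward differences are values of the
derivatives, by the mean value theorem.
-/

open Finset
open scoped fwdDiff Real RealInnerProductSpace

theorem e_add (s t : ℝ) : e (s + t) = e s * e t := by
  simp only [e, ← Complex.exp_add]
  push_cast
  ring_nf

@[simp]
theorem norm_e (t : ℝ) : ‖e t‖ = 1 := by
  rw [e, show (2 * π * Complex.I * t : ℂ) = (2 * π * t : ℝ) * Complex.I by push_cast; ring]
  exact Complex.norm_exp_ofReal_mul_I _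

theorem conj_e (t : ℝ) : starRingEnd ℂ (e t) = e (-t) := by
  simp only [e, ← Complex.exp_conj]
  simp [Complex.conj_ofNat]

theorem e_intCast (n : ℤ) : e n = 1 :=
  Complex.exp_eq_one_iff.2 ⟨n, by push_cast; ring⟩

theorem e_sub_intCast (t : ℝ) (n : ℤ) : e (t - n) = e t := by
  rw [← mul_one (e (t - n)), ← e_intCast n, ← e_add, sub_add_cancel]

theorem norm_sum_e_le_card {ι : Type*} (s : Finset ι) (f : ι → ℝ) :
    ‖∑ i ∈ s, e (f i)‖ ≤ #s := by
  simpa using norm_sum_le s fun i ↦ e (f i)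

theorem norm_sum_e_neg {ι : Type*} (s : Finset ι) (f : ι → ℝ) :
    ‖∑ i ∈ s, e (-f i)‖ = ‖∑ i ∈ s, e (f i)‖ := by
  simp_rw [← conj_e, ← map_sum, Complex.norm_conj]

/-! ### The Kusmin–Landau inequality -/

theorem inv_one_sub_e {t : ℝ} (ht : e t ≠ 1) :
    (1 - e t)⁻¹ = 1 / 2 + (Real.cot (π * t) / 2 : ℝ) * Complex.I := by
  have hcot : (Real.cot (π * t) : ℂ) = (e t + 1) / (Complex.I * (1 - e t)) := by
    rw [Complex.ofReal_cot, Complex.ofReal_mul, Complex.cot_pi_eq_exp_ratio]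
    rfl
  have ht' : 1 - e t ≠ 0 := sub_ne_zero.2 ht.symm
  rw [Complex.ofReal_div, hcot]
  push_cast
  field_simp
  ring

theorem antitoneOn_cot_pi_mul : AntitoneOn (fun t ↦ Real.cot (π * t)) (Set.Ioo 0 1) := by
  intro s hs t ht hst
  have sin_pos : ∀ u ∈ Set.Ioo (0 : ℝ) 1, 0 < Real.sin (π * u) := fun u hu ↦
    Real.sin_pos_of_pos_of_lt_pi (mul_pos Real.pi_pos hu.1) (by nlinarith [Real.pi_pos, hu.2])
  have sin_sub_nonneg : 0 ≤ Real.sin (π * t - π * s) :=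
    Real.sin_nonneg_of_nonneg_of_le_pi (by nlinarith [Real.pi_pos])
      (by nlinarith [Real.pi_pos, hs.1, ht.2])
  simp only [Real.cot_eq_cos_div_sin]
  rw [div_le_div_iff₀ (sin_pos t ht) (sin_pos s hs)]
  linarith [Real.sin_sub (π * t) (π * s)]

theorem two_mul_le_sin_pi_mul {θ t : ℝ} (hθ : 0 ≤ θ) (ht : t ∈ Set.Icc θ (1 - θ)) :
    2 * θ ≤ Real.sin (π * t) := by
  have le_sin : ∀ u, θ ≤ u → u ≤ 1 / 2 → 2 * θ ≤ Real.sin (π * u) := fun u h₁ h₂ ↦ calc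
    2 * θ ≤ 2 * u := by linarith
    _ = 2 / π * (π * u) := by field_simp
    _ ≤ Real.sin (π * u) :=
      Real.mul_le_sin (mul_nonneg Real.pi_pos.le (hθ.trans h₁)) (by nlinarith [Real.pi_pos])
  rcases le_total t (1 / 2) with h | h
  · exact le_sin t ht.1 h
  · rw [← Real.sin_pi_sub, show π - π * t = π * (1 - t) by ring]
    exact le_sin (1 - t) (by linarith [ht.2]) (by linarith)

theorem four_mul_le_norm_one_sub_e {θ t : ℝ} (hθ : 0 ≤ θ) (ht : t ∈ Set.Icc θ (1 - θ)) :
    4 * θ ≤ ‖1 - e t‖ := by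
  have heq : ‖1 - e t‖ = 2 * |Real.sin (π * t)| := by
    rw [norm_sub_rev, e, show (2 * π * Complex.I * t : ℂ) = Complex.I * (2 * π * t : ℝ) by
      push_cast; ring, Complex.norm_exp_I_mul_ofReal_sub_one]
    simp [mul_assoc]
  linarith [two_mul_le_sin_pi_mul hθ ht, le_abs_self (Real.sin (π * t))]

theorem norm_sum_mul_sub_le {R : Type*} [SeminormedRing R] (w z : ℕ → R) (hz : ∀ n, ‖z n‖ ≤ 1)
    (k : ℕ) :
    ‖∑ n ∈ range (k + 1), w n * (z n - z (n + 1))‖ ≤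
      ‖w 0‖ + ‖w k‖ + ∑ n ∈ range k, ‖w (n + 1) - w n‖ := by
  have norm_mul_le_left (a : R) (n : ℕ) : ‖a * z n‖ ≤ ‖a‖ :=
    (norm_mul_le _ _).trans (mul_le_of_le_one_right (norm_nonneg a) (hz n))
  have by_parts : ∑ n ∈ range (k + 1), w n * (z n - z (n + 1)) =
      w 0 * z 0 - w k * z (k + 1) + ∑ n ∈ range k, (w (n + 1) - w n) * z (n + 1) := by
    induction k with
    | zero => simp [mul_sub]
    | succ k ih => rw [sum_range_succ, ih, sum_range_succ]; noncomm_ring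
  rw [by_parts]
  refine (norm_add_le _ _).trans (add_le_add ((norm_sub_le _ _).trans ?_) (norm_sum_le_of_le _ ?_))
  · exact add_le_add (norm_mul_le_left _ _) (norm_mul_le_left _ _)
  · exact fun n _ ↦ norm_mul_le_left _ _

theorem e_ne_one_of_mem_Ioo {t : ℝ} (ht : t ∈ Set.Ioo 0 1) : e t ≠ 1 := fun h ↦ by
  have hθ : 0 < min t (1 - t) := lt_min ht.1 (sub_pos.2 ht.2)
  have := four_mul_le_norm_one_sub_e hθ.le
    ⟨min_le_left t (1 - t), le_sub_comm.1 (min_le_right t (1 - t))⟩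
  rw [h, sub_self, norm_zero] at this
  linarith

theorem norm_inv_one_sub_e_sub {s t : ℝ} (hs : s ∈ Set.Ioo 0 1) (ht : t ∈ Set.Ioo 0 1)
    (hst : s ≤ t) :
    ‖(1 - e t)⁻¹ - (1 - e s)⁻¹‖ = ((1 - e s)⁻¹).im - ((1 - e t)⁻¹).im := by
  have cot_le : Real.cot (π * t) ≤ Real.cot (π * s) := antitoneOn_cot_pi_mul hs ht hst
  rw [inv_one_sub_e (e_ne_one_of_mem_Ioo hs), inv_one_sub_e (e_ne_one_of_mem_Ioo ht),
    add_sub_add_left_eq_sub, ← sub_mul, ← Complex.ofReal_sub, norm_mul, Complex.norm_real,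
    Complex.norm_I, mul_one, Real.norm_of_nonpos (by linarith)]
  simp only [Complex.add_im, Complex.mul_I_im, Complex.ofReal_re]
  ring

theorem norm_sum_e_le_of_fwdDiff_mem_Icc {f : ℕ → ℝ} {L : ℕ} {θ : ℝ} (hθ : 0 < θ)
    (hf : ∀ n < L, Δ_[1] f n ∈ Set.Icc θ (1 - θ)) (hmono : MonotoneOn (Δ_[1] f) (Set.Iio L)) :
    ‖∑ n ∈ range L, e (f n)‖ ≤ 1 / θ := by
  obtain _ | k := L
  · simpa using hθ.le
  set w : ℕ → ℂ := fun n ↦ (1 - e (Δ_[1] f n))⁻¹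
  have mem_Ioo n (hn : n < k + 1) : Δ_[1] f n ∈ Set.Ioo 0 1 :=
    ⟨hθ.trans_le (hf n hn).1, by linarith [(hf n hn).2]⟩
  have norm_w_le n (hn : n < k + 1) : ‖w n‖ ≤ 1 / (4 * θ) := by
    rw [norm_inv, inv_eq_one_div]
    exact one_div_le_one_div_of_le (by positivity) (four_mul_le_norm_one_sub_e hθ.le (hf n hn))
  have summand_eq n (hn : n < k + 1) : e (f n) = w n * (e (f n) - e (f (n + 1))) := by
    have : e (f (n + 1)) = e (f n) * e (Δ_[1] f n) := by rw [← e_add, fwdDiff]; ring_nf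
    rw [this, ← mul_one_sub, mul_comm (e (f n)),
      inv_mul_cancel_left₀ (sub_ne_zero.2 (e_ne_one_of_mem_Ioo (mem_Ioo n hn)).symm)]
  have variation n (hn : n < k) : ‖w (n + 1) - w n‖ = (w n).im - (w (n + 1)).im :=
    norm_inv_one_sub_e_sub (mem_Ioo n (by lia)) (mem_Ioo (n + 1) (by lia))
      (hmono (Set.mem_Iio.2 (by lia)) (Set.mem_Iio.2 (by lia)) n.le_succ)
  have total_variation : ∑ n ∈ range k, ‖w (n + 1) - w n‖ ≤ ‖w 0‖ + ‖w k‖ := by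
    rw [sum_congr rfl fun n hn ↦ variation n (mem_range.1 hn), sum_range_sub']
    linarith [(abs_le.1 (Complex.abs_im_le_norm (w 0))).2,
      (abs_le.1 (Complex.abs_im_le_norm (w k))).1]
  calc ‖∑ n ∈ range (k + 1), e (f n)‖
      = ‖∑ n ∈ range (k + 1), w n * (e (f n) - e (f (n + 1)))‖ := by
        rw [← sum_congr rfl fun n hn ↦ summand_eq n (mem_range.1 hn)]
    _ ≤ ‖w 0‖ + ‖w k‖ + ∑ n ∈ range k, ‖w (n + 1) - w n‖ :=
        norm_sum_mul_sub_le w (fun n ↦ e (f n)) (fun n ↦ (norm_e _).le) k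
    _ ≤ 4 * (1 / (4 * θ)) := by
        linarith [norm_w_le 0 k.succ_pos, norm_w_le k k.lt_succ_self]
    _ = 1 / θ := by field_simp

theorem norm_sum_e_le_of_fwdDiff_sub_intCast_mem_Icc {f : ℕ → ℝ} {L : ℕ} {ν : ℤ} {θ : ℝ}
    (hθ : 0 < θ) (hf : ∀ n < L, Δ_[1] f n - ν ∈ Set.Icc θ (1 - θ))
    (hmono : MonotoneOn (Δ_[1] f) (Set.Iio L)) :
    ‖∑ n ∈ range L, e (f n)‖ ≤ 1 / θ := by
  have hdiff (n : ℕ) : Δ_[1] (fun n : ℕ ↦ f n - (ν * n : ℤ)) n = Δ_[1] f n - ν := by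
    simp only [fwdDiff]
    push_cast
    ring
  rw [← sum_congr rfl fun n (_ : n ∈ range L) ↦ e_sub_intCast (f n) (ν * n)]
  refine norm_sum_e_le_of_fwdDiff_mem_Icc hθ (fun n hn ↦ hdiff n ▸ hf n hn) ?_
  intro m hm n hn hmn
  rw [hdiff, hdiff]
  exact sub_le_sub_right (hmono hm hn hmn) _

/-! ### The second difference test -/

theorem mul_sub_le_sub_of_le_fwdDiff {g : ℕ → ℝ} {K : ℕ} {ℓ : ℝ}
    (hg : ∀ n, n + 1 < K → ℓ ≤ Δ_[1] g n) {m n : ℕ} (hmn : m ≤ n) (hn : n < K) :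
    ℓ * (n - m) ≤ g n - g m := by
  induction n, hmn using Nat.le_induction with
  | base => simp
  | succ n _ ih =>
    have step : ℓ ≤ g (n + 1) - g n := hg n hn
    have := ih (by lia)
    push_cast
    linarith

theorem monotoneOn_of_fwdDiff_nonneg {g : ℕ → ℝ} {K : ℕ}
    (hg : ∀ n, n + 1 < K → 0 ≤ Δ_[1] g n) : MonotoneOn g (Set.Iio K) := fun m _ n hn hmn ↦ by
  linarith [mul_sub_le_sub_of_le_fwdDiff hg hmn hn]

theorem card_filter_mem_Icc_le {g : ℕ → ℝ} {K : ℕ} {ℓ θ : ℝ} (hℓ : 0 < ℓ) (hθ : 0 ≤ θ)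
    (hg : ∀ n, n + 1 < K → ℓ ≤ Δ_[1] g n) (α : ℝ) :
    #{n ∈ range K | g n ∈ Set.Icc α (α + θ)} ≤ θ / ℓ + 1 := by
  set s := {n ∈ range K | g n ∈ Set.Icc α (α + θ)}
  rcases s.eq_empty_or_nonempty with hs | hs
  · simp only [hs, card_empty, Nat.cast_zero]
    positivity
  obtain ⟨-, hmin, -⟩ := mem_filter.1 (s.min'_mem hs)
  obtain ⟨hmax_lt, -, hmax⟩ := mem_filter.1 (s.max'_mem hs)
  have hle := s.min'_le_max' hs
  have spread := mul_sub_le_sub_of_le_fwdDiff hg hle (mem_range.1 hmax_lt)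
  have hsub : s ⊆ Icc (s.min' hs) (s.max' hs) := fun n hn ↦
    mem_Icc.2 ⟨s.min'_le n hn, s.le_max' n hn⟩
  calc (#s : ℝ) ≤ (s.max' hs + 1 - s.min' hs : ℕ) := mod_cast Nat.card_Icc _ _ ▸ card_le_card hsub
    _ = (s.max' hs - s.min' hs : ℝ) + 1 := by
        rw [Nat.cast_sub (by lia)]
        push_cast
        ring
    _ ≤ θ / ℓ + 1 := by
        gcongr
        rw [le_div_iff₀ hℓ]
        linarith

theorem exists_eq_Ico_of_ordConnected {s : Finset ℕ} (hs : (s : Set ℕ).OrdConnected) :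
    ∃ p q, s = Ico p q := by
  rcases s.eq_empty_or_nonempty with rfl | hne
  · exact ⟨0, 0, by simp⟩
  refine ⟨s.min' hne, s.max' hne + 1, ?_⟩
  ext n
  rw [mem_Ico, Nat.lt_succ_iff]
  exact ⟨fun hn ↦ ⟨s.min'_le n hn, s.le_max' n hn⟩,
    fun hn ↦ hs.out (s.min'_mem hne) (s.max'_mem hne) hn⟩

theorem norm_sum_e_filter_le {f : ℕ → ℝ} {K : ℕ} {θ : ℝ} (hθ : 0 < θ)
    (hmono : MonotoneOn (Δ_[1] f) (Set.Iio K)) (ν : ℤ) :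
    ‖∑ n ∈ range K with Δ_[1] f n - ν ∈ Set.Icc θ (1 - θ), e (f n)‖ ≤ 1 / θ := by
  obtain ⟨p, q, hpq⟩ : ∃ p q, {n ∈ range K | Δ_[1] f n - ν ∈ Set.Icc θ (1 - θ)} = Ico p q := by
    refine exists_eq_Ico_of_ordConnected ⟨fun m hm n hn i hi ↦ ?_⟩
    simp only [coe_filter, mem_range, Set.mem_ofPred_eq, Set.mem_Icc] at hm hn ⊢
    have hiK : i < K := hi.2.trans_lt hn.1
    have lower := hmono hm.1 hiK hi.1
    have upper := hmono hiK hn.1 hi.2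
    exact ⟨hiK, by linarith [hm.2.1], by linarith [hn.2.2]⟩
  have mem i (hi : i < q - p) : p + i < K ∧ Δ_[1] f (p + i) - ν ∈ Set.Icc θ (1 - θ) := by
    have : p + i ∈ Ico p q := mem_Ico.2 ⟨by lia, by lia⟩
    simpa [← hpq] using this
  rw [hpq, sum_Ico_eq_sum_range]
  refine norm_sum_e_le_of_fwdDiff_sub_intCast_mem_Icc hθ (fun i hi ↦ (mem i hi).2) ?_
  exact fun i hi j hj hij ↦ hmono (mem i hi).1 (mem j hj).1 (Nat.add_le_add_left hij p)

theorem norm_sum_e_floor_eq_le {f : ℕ → ℝ} {K : ℕ} {ℓ θ : ℝ} (hℓ : 0 < ℓ) (hθ : 0 < θ)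
    (hf : ∀ n, n + 1 < K → ℓ ≤ Δ_[1] (Δ_[1] f) n) (ν : ℤ) :
    ‖∑ n ∈ range K with ⌊Δ_[1] f n⌋ = ν, e (f n)‖ ≤ 2 * (θ / ℓ + 1) + 1 / θ := by
  set fibre := {n ∈ range K | ⌊Δ_[1] f n⌋ = ν}
  set middle := {n ∈ range K | Δ_[1] f n - ν ∈ Set.Icc θ (1 - θ)}
  have middle_subset : middle ⊆ fibre := fun n hn ↦ by
    simp only [middle, fibre, mem_filter, Set.mem_Icc, Int.floor_eq_iff] at hn ⊢
    exact ⟨hn.1, by linarith [hn.2.1], by linarith [hn.2.2]⟩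
  have ends_subset : fibre \ middle ⊆ {n ∈ range K | Δ_[1] f n ∈ Set.Icc (ν : ℝ) (ν + θ)} ∪
      {n ∈ range K | Δ_[1] f n ∈ Set.Icc (ν + 1 - θ) (ν + 1 - θ + θ)} := fun n hn ↦ by
    simp only [middle, fibre, mem_sdiff, mem_union, mem_filter, Set.mem_Icc, Int.floor_eq_iff]
      at hn ⊢
    grind
  have card_ends : (#(fibre \ middle) : ℝ) ≤ 2 * (θ / ℓ + 1) := calc
    (#(fibre \ middle) : ℝ) ≤ #{n ∈ range K | Δ_[1] f n ∈ Set.Icc (ν : ℝ) (ν + θ)} +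
        #{n ∈ range K | Δ_[1] f n ∈ Set.Icc (ν + 1 - θ) (ν + 1 - θ + θ)} := by
      rw [← Nat.cast_add, Nat.cast_le]
      exact (card_le_card ends_subset).trans (card_union_le _ _)
    _ ≤ (θ / ℓ + 1) + (θ / ℓ + 1) :=
      add_le_add (card_filter_mem_Icc_le hℓ hθ.le hf _) (card_filter_mem_Icc_le hℓ hθ.le hf _)
    _ = 2 * (θ / ℓ + 1) := by ring
  rw [← sum_sdiff middle_subset]
  refine (norm_add_le _ _).trans (add_le_add ((norm_sum_e_le_card _ _).trans card_ends) ?_)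
  exact norm_sum_e_filter_le hθ
    (monotoneOn_of_fwdDiff_nonneg fun n hn ↦ hℓ.le.trans (hf n hn)) ν

theorem card_image_floor_le {g : ℕ → ℝ} {K : ℕ} {u : ℝ} (hu : 0 ≤ u)
    (hg : ∀ n, n + 1 < K → Δ_[1] g n ∈ Set.Icc 0 u) :
    #((range K).image fun n ↦ ⌊g n⌋) ≤ u * K + 2 := by
  obtain _ | k := K
  · simp
  have hmono := monotoneOn_of_fwdDiff_nonneg fun n hn ↦ (hg n hn).1
  have mem_Iio {n : ℕ} (hn : n ≤ k) : n ∈ Set.Iio (k + 1) := Nat.lt_succ_of_le hn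
  have range_le : g k - g 0 ≤ u * k := by
    have := mul_sub_le_sub_of_le_fwdDiff (g := fun n ↦ -g n) (ℓ := -u)
      (fun n hn ↦ by have := (hg n hn).2; simp only [fwdDiff] at this ⊢; linarith)
      k.zero_le k.lt_succ_self
    simp only [Nat.cast_zero] at this
    linarith
  have hsub : ((range (k + 1)).image fun n ↦ ⌊g n⌋) ⊆ Icc ⌊g 0⌋ ⌊g k⌋ := by
    refine image_subset_iff.2 fun n hn ↦ mem_Icc.2 ?_
    have hn : n ≤ k := Nat.lt_succ_iff.1 (mem_range.1 hn)
    exact ⟨Int.floor_mono (hmono (mem_Iio k.zero_le) (mem_Iio hn) n.zero_le),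
      Int.floor_mono (hmono (mem_Iio hn) (mem_Iio le_rfl) hn)⟩
  have floor_le : ⌊g 0⌋ ≤ ⌊g k⌋ :=
    Int.floor_mono (hmono (mem_Iio k.zero_le) (mem_Iio le_rfl) k.zero_le)
  calc (#((range (k + 1)).image fun n ↦ ⌊g n⌋) : ℝ) ≤ #(Icc ⌊g 0⌋ ⌊g k⌋) :=
        mod_cast card_le_card hsub
    _ = ⌊g k⌋ + 1 - ⌊g 0⌋ := mod_cast Int.card_Icc_of_le _ _ (by lia)
    _ ≤ u * (k + 1 : ℕ) + 2 := by
        push_cast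
        linarith [Int.floor_le (g k), Int.lt_floor_add_one (g 0)]

theorem norm_sum_e_le_of_fwdDiff_fwdDiff_mem_Icc {f : ℕ → ℝ} {K : ℕ} {ℓ u θ : ℝ} (hℓ : 0 < ℓ)
    (hu : 0 ≤ u) (hθ : 0 < θ) (hf : ∀ n, n + 1 < K → Δ_[1] (Δ_[1] f) n ∈ Set.Icc ℓ u) :
    ‖∑ n ∈ range K, e (f n)‖ ≤ (u * K + 2) * (2 * (θ / ℓ + 1) + 1 / θ) := by
  set floors := (range K).image fun n ↦ ⌊Δ_[1] f n⌋
  calc ‖∑ n ∈ range K, e (f n)‖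
      = ‖∑ ν ∈ floors, ∑ n ∈ range K with ⌊Δ_[1] f n⌋ = ν, e (f n)‖ := by
        rw [sum_fiberwise_of_maps_to fun n hn ↦ mem_image_of_mem _ hn]
    _ ≤ ∑ ν ∈ floors, (2 * (θ / ℓ + 1) + 1 / θ) :=
        norm_sum_le_of_le _ fun ν _ ↦ norm_sum_e_floor_eq_le hℓ hθ (fun n hn ↦ (hf n hn).1) ν
    _ = #floors * (2 * (θ / ℓ + 1) + 1 / θ) := by rw [sum_const, nsmul_eq_mul]
    _ ≤ (u * K + 2) * (2 * (θ / ℓ + 1) + 1 / θ) := by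
        gcongr
        exact card_image_floor_le hu fun n hn ↦ ⟨hℓ.le.trans (hf n hn).1, (hf n hn).2⟩

/-- The van der Corput test of order `k` with constants `A, C` and exponents `a, b`: the analogue
for sequences of the `k`-th derivative test, with the `k`-th forward difference in place of the
`k`-th derivative. Keeping `a` and `b` as parameters makes the test suitable for induction on `k`;
the exponents that can be reached are those of `exists_vanDerCorputTest`. -/
def VanDerCorputTest (k : ℕ) (A C a b : ℝ) : Prop :=
  ∀ ⦃f : ℕ → ℝ⦄ ⦃ℓ : ℝ⦄ ⦃L : ℕ⦄, 0 < ℓ →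
    (∀ n, n + k < L → Δ_[1] ^[k] f n ∈ Set.Icc ℓ (A * ℓ)) →
    ‖∑ n ∈ range L, e (f n)‖ ≤ C * (L * ℓ ^ a + (L : ℝ) ^ (1 - b) * ℓ ^ (-a))

theorem vanDerCorputTest_two {A : ℝ} (hA : 0 ≤ A) :
    VanDerCorputTest 2 A (5 * A + 11) (1 / 2) 1 := by
  intro f ℓ L hℓ hf
  have hs : 0 < √ℓ := Real.sqrt_pos.2 hℓ
  rw [Real.rpow_neg hℓ.le, ← Real.sqrt_eq_rpow, sub_self, Real.rpow_zero, one_mul]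
  rcases le_total 1 ℓ with hℓ₁ | hℓ₁
  · calc ‖∑ n ∈ range L, e (f n)‖ ≤ L := by simpa using norm_sum_e_le_card (range L) f
      _ ≤ L * √ℓ := le_mul_of_one_le_right L.cast_nonneg (Real.one_le_sqrt.2 hℓ₁)
      _ ≤ L * √ℓ + (√ℓ)⁻¹ := le_add_of_nonneg_right (by positivity)
      _ ≤ (5 * A + 11) * (L * √ℓ + (√ℓ)⁻¹) := le_mul_of_one_le_left (by positivity) (by linarith)
  obtain _ | K := L
  · simp only [range_zero, sum_empty, norm_zero]
    positivity
  have one_le_inv : 1 ≤ (√ℓ)⁻¹ := (one_le_inv₀ hs).2 (Real.sqrt_le_one.2 hℓ₁)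
  have hK := norm_sum_e_le_of_fwdDiff_fwdDiff_mem_Icc hℓ (by positivity) hs
    (fun n (hn : n + 1 < K) ↦ hf n (by lia))
  calc ‖∑ n ∈ range (K + 1), e (f n)‖
      ≤ ‖∑ n ∈ range K, e (f n)‖ + 1 := by
        rw [sum_range_succ, ← norm_e (f K)]
        exact norm_add_le _ _
    _ ≤ (A * ℓ * K + 2) * (2 * (√ℓ / ℓ + 1) + 1 / √ℓ) + 1 := by gcongr
    _ ≤ (A * ℓ * K + 2) * (5 * (√ℓ)⁻¹) + (√ℓ)⁻¹ := by
        rw [Real.sqrt_div_self, one_div]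
        gcongr
        linarith
    _ = 5 * A * (K * √ℓ) + 11 * (√ℓ)⁻¹ := by
        have : ℓ * (√ℓ)⁻¹ = √ℓ := by rw [← div_eq_mul_inv, Real.div_sqrt]
        linear_combination 5 * A * K * this
    _ ≤ (5 * A + 11) * ((K + 1 : ℕ) * √ℓ + (√ℓ)⁻¹) := by
        push_cast
        nlinarith [mul_nonneg K.cast_nonneg hs.le, mul_nonneg hA hs.le,
          mul_nonneg hA (inv_nonneg.2 hs.le)]

/-! ### The Weyl–van der Corput inequality -/

theorem sum_range_shift_eq_sum_Ico {α : Type*} [AddCommMonoid α] {φ : ℕ → α} {H L j : ℕ}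
    (hj : j ≤ H) (hφ : ∀ n ∉ Ico H (H + L), φ n = 0) :
    ∑ m ∈ range (L + H), φ (m + j) = ∑ n ∈ Ico H (H + L), φ n := by
  rw [range_eq_Ico, sum_Ico_add' φ]
  symm
  exact sum_subset (Ico_subset_Ico (by lia) (by lia)) fun n _ hn ↦ hφ n hn

theorem sum_range_dist_le {c : ℕ → ℝ} {j H : ℕ} (hj : j < H) :
    ∑ k ∈ range H, c (j.dist k) ≤ c 0 + 2 * ∑ i ∈ range H, |c (i + 1)| := by
  have le_abs {m : ℕ} (hm : m ≤ H) : ∑ i ∈ range m, c (i + 1) ≤ ∑ i ∈ range H, |c (i + 1)| :=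
    (sum_le_sum fun i _ ↦ le_abs_self _).trans
      (sum_le_sum_of_subset_of_nonneg (range_subset_range.2 hm) fun _ _ _ ↦ abs_nonneg _)
  have below : ∑ k ∈ range j, c (j.dist k) = ∑ i ∈ range j, c (i + 1) := by
    rw [← sum_range_reflect]
    refine sum_congr rfl fun k hk ↦ congrArg c ?_
    have := mem_range.1 hk
    rw [Nat.dist_comm, Nat.dist_eq_sub_of_le (by lia)]
    lia
  have above : ∑ k ∈ Ico j H, c (j.dist k) = ∑ i ∈ range (H - j - 1), c (i + 1) + c 0 := by
    rw [sum_Ico_eq_sum_range, ← sum_range_succ', Nat.sub_add_cancel (by lia)]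
    exact sum_congr rfl fun i _ ↦ by rw [Nat.dist_eq_sub_of_le (by lia), Nat.add_sub_cancel_left]
  rw [← sum_range_add_sum_Ico _ hj.le, below, above]
  linarith [le_abs hj.le, le_abs (m := H - j - 1) (by lia)]

section InnerProductSpace

variable {E : Type*} [NormedAddCommGroup E] [InnerProductSpace ℝ E]

theorem sum_inner_shift_eq {v : ℕ → E} {H L : ℕ} (hv : ∀ n ∉ Ico H (H + L), v n = 0) {j k : ℕ}
    (hj : j ≤ H) (hk : k ≤ H) :
    ∑ m ∈ range (L + H), ⟪v (m + j), v (m + k)⟫ =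
      ∑ n ∈ Ico H (H + L), ⟪v n, v (n + j.dist k)⟫ := by
  wlog hjk : j ≤ k generalizing j k
  · simp_rw [real_inner_comm (v (_ + k)), Nat.dist_comm j k]
    exact this hk hj (by lia)
  obtain ⟨d, rfl⟩ := Nat.exists_eq_add_of_le hjk
  rw [Nat.dist_eq_sub_of_le hjk, Nat.add_sub_cancel_left,
    ← sum_range_shift_eq_sum_Ico hj fun n hn ↦ by rw [hv n hn, inner_zero_left]]
  simp only [add_assoc]

theorem sum_norm_sum_shift_sq_le {v : ℕ → E} {H L : ℕ} (hv : ∀ n ∉ Ico H (H + L), v n = 0) :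
    ∑ m ∈ range (L + H), ‖∑ j ∈ range H, v (m + j)‖ ^ 2 ≤
      H * (∑ n ∈ Ico H (H + L), ‖v n‖ ^ 2 +
        2 * ∑ j ∈ range H, |∑ n ∈ Ico H (H + L), ⟪v n, v (n + (j + 1))⟫|) := by
  set c : ℕ → ℝ := fun d ↦ ∑ n ∈ Ico H (H + L), ⟪v n, v (n + d)⟫
  have c_zero : c 0 = ∑ n ∈ Ico H (H + L), ‖v n‖ ^ 2 :=
    sum_congr rfl fun n _ ↦ real_inner_self_eq_norm_sq _
  calc ∑ m ∈ range (L + H), ‖∑ j ∈ range H, v (m + j)‖ ^ 2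
      = ∑ m ∈ range (L + H), ∑ j ∈ range H, ∑ k ∈ range H, ⟪v (m + j), v (m + k)⟫ := by
        simp_rw [← real_inner_self_eq_norm_sq, sum_inner, inner_sum]
    _ = ∑ j ∈ range H, ∑ k ∈ range H, ∑ m ∈ range (L + H), ⟪v (m + j), v (m + k)⟫ := by
        rw [sum_comm]
        exact sum_congr rfl fun j _ ↦ sum_comm
    _ = ∑ j ∈ range H, ∑ k ∈ range H, c (j.dist k) :=
        sum_congr rfl fun j hj ↦ sum_congr rfl fun k hk ↦
          sum_inner_shift_eq hv (mem_range.1 hj).le (mem_range.1 hk).le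
    _ ≤ ∑ j ∈ range H, (c 0 + 2 * ∑ i ∈ range H, |c (i + 1)|) :=
        sum_le_sum fun j hj ↦ sum_range_dist_le (mem_range.1 hj)
    _ = _ := by rw [sum_const, card_range, nsmul_eq_mul, c_zero]

theorem mul_norm_sum_Ico_sq_le {v : ℕ → E} {H L : ℕ} (hH : 0 < H)
    (hv : ∀ n ∉ Ico H (H + L), v n = 0) :
    H * ‖∑ n ∈ Ico H (H + L), v n‖ ^ 2 ≤
      (L + H) * (∑ n ∈ Ico H (H + L), ‖v n‖ ^ 2 +
        2 * ∑ j ∈ range H, |∑ n ∈ Ico H (H + L), ⟪v n, v (n + (j + 1))⟫|) := by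
  -- Each term lies in exactly `H` of the windows `m, …, m + H - 1`.
  have windows : H • ∑ n ∈ Ico H (H + L), v n =
      ∑ m ∈ range (L + H), ∑ j ∈ range H, v (m + j) := by
    rw [sum_comm, sum_congr rfl fun j hj ↦ sum_range_shift_eq_sum_Ico (mem_range.1 hj).le hv,
      sum_const, card_range]
  refine le_of_mul_le_mul_left ?_ (Nat.cast_pos.2 hH : (0 : ℝ) < H)
  calc H * (H * ‖∑ n ∈ Ico H (H + L), v n‖ ^ 2)
      = ‖∑ m ∈ range (L + H), ∑ j ∈ range H, v (m + j)‖ ^ 2 := by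
        rw [← windows, ← Nat.cast_smul_eq_nsmul ℝ, norm_smul, Real.norm_natCast]
        ring
    _ ≤ (∑ m ∈ range (L + H), ‖∑ j ∈ range H, v (m + j)‖) ^ 2 := by
        gcongr
        exact norm_sum_le _ _
    _ ≤ (L + H) * ∑ m ∈ range (L + H), ‖∑ j ∈ range H, v (m + j)‖ ^ 2 := by
        simpa using sq_sum_le_card_mul_sum_sq (s := range (L + H))
          (f := fun m ↦ ‖∑ j ∈ range H, v (m + j)‖)
    _ ≤ (L + H) * (H * _) := by
        gcongr
        exact sum_norm_sum_shift_sq_le hv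
    _ = H * ((L + H) * _) := by ring

theorem mul_norm_sum_range_sq_le (z : ℕ → E) {H : ℕ} (hH : 0 < H) (L : ℕ) :
    H * ‖∑ n ∈ range L, z n‖ ^ 2 ≤
      (L + H) * (∑ n ∈ range L, ‖z n‖ ^ 2 +
        2 * ∑ j ∈ range H, |∑ n ∈ range (L - (j + 1)), ⟪z n, z (n + (j + 1))⟫|) := by
  set v : ℕ → E := fun n ↦ if n ∈ Ico H (H + L) then z (n - H) else 0
  have v_eq {i : ℕ} (hi : i < L) : v (H + i) = z i := by
    simp only [v, mem_Ico]
    rw [if_pos (by lia), Nat.add_sub_cancel_left]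
  have v_eq_zero {n : ℕ} (hn : n ∉ Ico H (H + L)) : v n = 0 := if_neg hn
  have correlation (d : ℕ) : ∑ n ∈ Ico H (H + L), ⟪v n, v (n + d)⟫ =
      ∑ n ∈ range (L - d), ⟪z n, z (n + d)⟫ := by
    rw [sum_Ico_eq_sum_range, Nat.add_sub_cancel_left,
      ← sum_subset (range_subset_range.2 (L.sub_le d))]
    · refine sum_congr rfl fun i hi ↦ ?_
      have := mem_range.1 hi
      rw [add_assoc, v_eq (by lia), v_eq (by lia)]
    · intro i _ hi
      rw [v_eq_zero (n := H + i + d), inner_zero_right]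
      simp only [mem_range, mem_Ico] at hi ⊢
      lia
  have sum_v : ∑ n ∈ Ico H (H + L), v n = ∑ n ∈ range L, z n := by
    rw [sum_Ico_eq_sum_range, Nat.add_sub_cancel_left]
    exact sum_congr rfl fun i hi ↦ v_eq (mem_range.1 hi)
  have sum_norm_v : ∑ n ∈ Ico H (H + L), ‖v n‖ ^ 2 = ∑ n ∈ range L, ‖z n‖ ^ 2 := by
    rw [sum_Ico_eq_sum_range, Nat.add_sub_cancel_left]
    exact sum_congr rfl fun i hi ↦ by rw [v_eq (mem_range.1 hi)]
  have main := mul_norm_sum_Ico_sq_le hH fun n ↦ v_eq_zero (n := n)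
  rw [sum_v, sum_norm_v] at main
  simpa only [correlation] using main

end InnerProductSpace

theorem inner_e_e (s t : ℝ) : ⟪e s, e t⟫ = (e (t - s)).re := by
  rw [Complex.inner, conj_e, ← e_add, sub_eq_add_neg]

theorem mul_norm_sum_e_sq_le (f : ℕ → ℝ) {H : ℕ} (hH : 0 < H) (L : ℕ) :
    H * ‖∑ n ∈ range L, e (f n)‖ ^ 2 ≤
      (L + H) * (L + 2 * ∑ j ∈ range H, ‖∑ n ∈ range (L - (j + 1)), e (Δ_[j + 1] f n)‖) := by
  calc H * ‖∑ n ∈ range L, e (f n)‖ ^ 2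
      ≤ (L + H) * (∑ n ∈ range L, ‖e (f n)‖ ^ 2 +
        2 * ∑ j ∈ range H, |∑ n ∈ range (L - (j + 1)), ⟪e (f n), e (f (n + (j + 1)))⟫|) :=
        mul_norm_sum_range_sq_le (fun n ↦ e (f n)) hH L
    _ = (L + H) * (L + 2 * ∑ j ∈ range H, |(∑ n ∈ range (L - (j + 1)), e (Δ_[j + 1] f n)).re|) := by
        simp only [norm_e, inner_e_e, Complex.re_sum, fwdDiff]
        simp
    _ ≤ _ := by
        gcongr
        exact Complex.abs_re_le_norm _

/-! ### The difference test of order `k` -/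

theorem fwdDiff_iter_fwdDiff_eq_sum {G : Type*} [AddCommGroup G] (f : ℕ → G) (k h n : ℕ) :
    Δ_[1] ^[k] (Δ_[h] f) n = ∑ i ∈ range h, Δ_[1] ^[k + 1] f (n + i) := by
  have telescope : Δ_[h] f = ∑ i ∈ range h, fun n ↦ Δ_[1] f (n + i) := by
    ext n
    simpa [fwdDiff, add_assoc] using (sum_range_sub (fun i ↦ f (n + i)) h).symm
  rw [telescope, fwdDiff_iter_finsetSum, Finset.sum_apply]
  exact sum_congr rfl fun i _ ↦ fwdDiff_iter_comp_add 1 _ i k n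

theorem sum_range_rpow_le {a : ℝ} (ha : 0 ≤ a) (H : ℕ) :
    ∑ j ∈ range H, ((j + 1 : ℕ) : ℝ) ^ a ≤ H * (H : ℝ) ^ a := by
  simpa using sum_le_card_nsmul (range H) _ ((H : ℝ) ^ a) fun j hj ↦
    Real.rpow_le_rpow (Nat.cast_nonneg _) (Nat.cast_le.2 (mem_range.1 hj)) ha

theorem mul_sum_range_rpow_neg_le {a : ℝ} (ha₀ : 0 ≤ a) (ha₁ : a < 1) (H : ℕ) :
    (1 - a) * ∑ j ∈ range H, ((j + 1 : ℕ) : ℝ) ^ (-a) ≤ (H : ℝ) ^ (1 - a) := by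
  have bernoulli (j : ℕ) :
      (1 - a) * ((j + 1 : ℕ) : ℝ) ^ (-a) ≤ ((j + 1 : ℕ) : ℝ) ^ (1 - a) - (j : ℝ) ^ (1 - a) := by
    set s : ℝ := ((j + 1 : ℕ) : ℝ)
    have hs : 1 ≤ s := by simp [s]
    have hj : (j : ℝ) = s * (1 + -s⁻¹) := by
      simp only [s]
      push_cast
      field_simp
      ring
    have base_nonneg : 0 ≤ 1 + -s⁻¹ := by linarith [inv_le_one_of_one_le₀ hs]
    calc (1 - a) * s ^ (-a) = s ^ (1 - a) - s ^ (1 - a) * (1 + (1 - a) * -s⁻¹) := by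
          rw [Real.rpow_sub (by positivity), Real.rpow_neg (by positivity), Real.rpow_one]
          field_simp
          ring
      _ ≤ s ^ (1 - a) - s ^ (1 - a) * (1 + -s⁻¹) ^ (1 - a) := by
          gcongr
          exact rpow_one_add_le_one_add_mul_self (by linarith) (by linarith) (by linarith)
      _ = s ^ (1 - a) - j ^ (1 - a) := by
          rw [hj, Real.mul_rpow (by positivity) base_nonneg]
  calc (1 - a) * ∑ j ∈ range H, ((j + 1 : ℕ) : ℝ) ^ (-a)
      ≤ ∑ j ∈ range H, (((j + 1 : ℕ) : ℝ) ^ (1 - a) - (j : ℝ) ^ (1 - a)) := by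
        rw [mul_sum]
        exact sum_le_sum fun j _ ↦ bernoulli j
    _ = (H : ℝ) ^ (1 - a) := by
        rw [sum_range_sub (fun j : ℕ ↦ (j : ℝ) ^ (1 - a)), Nat.cast_zero,
          Real.zero_rpow (by linarith), sub_zero]

theorem rpow_one_sub_half_sq {b L : ℝ} (hL : 0 ≤ L) (hb : b ≤ 1) :
    (L ^ (1 - b / 2)) ^ 2 = L * L ^ (1 - b) := by
  rw [← Real.rpow_mul_natCast hL, ← Real.rpow_one_add' hL (by linarith)]
  norm_num
  ring_nf

namespace VanDerCorputTest

variable {k : ℕ} {A C a b : ℝ}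

theorem norm_sum_e_fwdDiff_le (htest : VanDerCorputTest k A C a b) (hC : 0 ≤ C) (hb : b ≤ 1)
    {f : ℕ → ℝ} {ℓ : ℝ} {L : ℕ} (hℓ : 0 < ℓ)
    (hf : ∀ n, n + (k + 1) < L → Δ_[1] ^[k + 1] f n ∈ Set.Icc ℓ (A * ℓ)) {h : ℕ} (hh : 0 < h) :
    ‖∑ n ∈ range (L - h), e (Δ_[h] f n)‖ ≤
      C * (L * (h * ℓ) ^ a + (L : ℝ) ^ (1 - b) * (h * ℓ) ^ (-a)) := by
  have hdiff n (hn : n + k < L - h) : Δ_[1] ^[k] (Δ_[h] f) n ∈ Set.Icc (h * ℓ) (A * (h * ℓ)) := by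
    have mem i (hi : i ∈ range h) : Δ_[1] ^[k + 1] f (n + i) ∈ Set.Icc ℓ (A * ℓ) :=
      hf (n + i) (by have := mem_range.1 hi; lia)
    rw [fwdDiff_iter_fwdDiff_eq_sum]
    constructor
    · simpa using card_nsmul_le_sum _ _ _ fun i hi ↦ (mem i hi).1
    · simpa [mul_left_comm] using sum_le_card_nsmul _ _ _ fun i hi ↦ (mem i hi).2
  refine (htest (mul_pos (Nat.cast_pos.2 hh) hℓ) hdiff).trans ?_
  have : ((L - h : ℕ) : ℝ) ≤ L := Nat.cast_le.2 (L.sub_le h)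
  gcongr

theorem sum_norm_sum_e_fwdDiff_le (htest : VanDerCorputTest k A C a b) (hC : 0 ≤ C)
    (ha₀ : 0 ≤ a) (ha : a ≤ 1 / 2) (hb : b ≤ 1) {f : ℕ → ℝ} {ℓ : ℝ} {L : ℕ} (hℓ : 0 < ℓ)
    (hf : ∀ n, n + (k + 1) < L → Δ_[1] ^[k + 1] f n ∈ Set.Icc ℓ (A * ℓ)) {H : ℕ} (hH : 0 < H) :
    ∑ j ∈ range H, ‖∑ n ∈ range (L - (j + 1)), e (Δ_[j + 1] f n)‖ ≤
      C * H * (L * (H * ℓ) ^ a + 2 * (L : ℝ) ^ (1 - b) * (H * ℓ) ^ (-a)) := by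
  have hH' : (0 : ℝ) < H := Nat.cast_pos.2 hH
  have sum_neg : ∑ j ∈ range H, ((j + 1 : ℕ) : ℝ) ^ (-a) ≤ 2 * (H * (H : ℝ) ^ (-a)) := by
    have nonneg : 0 ≤ ∑ j ∈ range H, ((j + 1 : ℕ) : ℝ) ^ (-a) := by positivity
    have := mul_sum_range_rpow_neg_le ha₀ (by linarith) H
    rw [sub_eq_add_neg, Real.rpow_add hH', Real.rpow_one] at this
    nlinarith
  calc ∑ j ∈ range H, ‖∑ n ∈ range (L - (j + 1)), e (Δ_[j + 1] f n)‖
      ≤ ∑ j ∈ range H, C * (L * ((j + 1 : ℕ) * ℓ) ^ a +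
          (L : ℝ) ^ (1 - b) * ((j + 1 : ℕ) * ℓ) ^ (-a)) :=
        sum_le_sum fun j _ ↦ htest.norm_sum_e_fwdDiff_le hC hb hℓ hf j.succ_pos
    _ = C * (L * ℓ ^ a * ∑ j ∈ range H, ((j + 1 : ℕ) : ℝ) ^ a +
          (L : ℝ) ^ (1 - b) * ℓ ^ (-a) * ∑ j ∈ range H, ((j + 1 : ℕ) : ℝ) ^ (-a)) := by
        simp only [Real.mul_rpow (Nat.cast_nonneg _) hℓ.le, mul_sum, ← sum_add_distrib]
        exact sum_congr rfl fun j _ ↦ by ring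
    _ ≤ C * (L * ℓ ^ a * (H * (H : ℝ) ^ a) +
          (L : ℝ) ^ (1 - b) * ℓ ^ (-a) * (2 * (H * (H : ℝ) ^ (-a)))) := by
        gcongr
        exact sum_range_rpow_le ha₀ H
    _ = C * H * (L * (H * ℓ) ^ a + 2 * (L : ℝ) ^ (1 - b) * (H * ℓ) ^ (-a)) := by
        rw [Real.mul_rpow hH'.le hℓ.le, Real.mul_rpow hH'.le hℓ.le]
        ring

-- `hρ` makes `ρ` the shift length that balances the diagonal term of the Weyl–van der Corput
-- inequality against the main term of the test for the differenced sums.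
theorem norm_sum_e_sq_le (htest : VanDerCorputTest k A C a b) (hC : 0 ≤ C)
    (ha₀ : 0 ≤ a) (ha : a ≤ 1 / 2) (hb : b ≤ 1) {f : ℕ → ℝ} {ℓ : ℝ} {L : ℕ} (hℓ : 0 < ℓ)
    (hf : ∀ n, n + (k + 1) < L → Δ_[1] ^[k + 1] f n ∈ Set.Icc ℓ (A * ℓ))
    {ρ : ℝ} (hρ₁ : 1 ≤ ρ) (hρL : ρ ≤ L) (hρ : (ρ * ℓ) ^ a = ρ⁻¹) :
    ‖∑ n ∈ range L, e (f n)‖ ^ 2 ≤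
      (4 + 16 * C) * ((L : ℝ) ^ 2 * ρ⁻¹ + L * (L : ℝ) ^ (1 - b) * ρ) := by
  have hρ₀ : 0 < ρ := by linarith
  obtain ⟨H, hH, hHρ, hρH⟩ : ∃ H : ℕ, 0 < H ∧ (H : ℝ) ≤ ρ ∧ ρ ≤ 2 * H := by
    have one_le : 1 ≤ ⌊ρ⌋₊ := Nat.le_floor (by simpa using hρ₁)
    have one_le' : (1 : ℝ) ≤ ⌊ρ⌋₊ := mod_cast one_le
    exact ⟨⌊ρ⌋₊, one_le, Nat.floor_le hρ₀.le, by linarith [Nat.lt_floor_add_one ρ]⟩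
  have hH' : (0 : ℝ) < H := Nat.cast_pos.2 hH
  have pow_le : (H * ℓ) ^ a ≤ ρ⁻¹ := by
    rw [← hρ]
    gcongr
  have pow_neg_le : (H * ℓ) ^ (-a) ≤ 2 * ρ := calc
    (H * ℓ) ^ (-a) ≤ (2⁻¹ * (ρ * ℓ)) ^ (-a) :=
      Real.rpow_le_rpow_of_nonpos (by positivity) (by nlinarith) (by linarith)
    _ = 2 ^ a * ρ := by
      rw [Real.mul_rpow (by positivity) (by positivity), Real.rpow_neg (by positivity),
        Real.rpow_neg (by positivity), hρ, inv_inv, Real.inv_rpow zero_le_two, inv_inv]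
    _ ≤ 2 * ρ := by
      gcongr
      exact Real.rpow_le_self_of_one_le one_le_two (by linarith)
  refine le_of_mul_le_mul_left ?_ hH'
  calc H * ‖∑ n ∈ range L, e (f n)‖ ^ 2
      ≤ (L + H) * (L + 2 * ∑ j ∈ range H, ‖∑ n ∈ range (L - (j + 1)), e (Δ_[j + 1] f n)‖) :=
        mul_norm_sum_e_sq_le f hH L
    _ ≤ (L + L) * (2 * H * ρ⁻¹ * L +
          2 * (C * H * (L * ρ⁻¹ + 2 * (L : ℝ) ^ (1 - b) * (2 * ρ)))) := by
        gcongr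
        · exact mod_cast hHρ.trans hρL
        · refine le_mul_of_one_le_left L.cast_nonneg ?_
          rwa [← div_eq_mul_inv, one_le_div hρ₀]
        · refine (htest.sum_norm_sum_e_fwdDiff_le hC ha₀ ha hb hℓ hf hH).trans ?_
          gcongr
    _ ≤ H * ((4 + 16 * C) * ((L : ℝ) ^ 2 * ρ⁻¹ + L * (L : ℝ) ^ (1 - b) * ρ)) := by
        have h₁ : 0 ≤ C * (H * (L : ℝ) ^ 2 * ρ⁻¹) := by positivity
        have h₂ : 0 ≤ H * (L * (L : ℝ) ^ (1 - b) * ρ) := by positivity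
        linarith

theorem norm_sum_e_sq_le_of_rpow_sq_le (htest : VanDerCorputTest k A C a b) (hC : 0 ≤ C)
    (ha₀ : 0 ≤ a) (ha : a ≤ 1 / 2) (hb : b ≤ 1) {f : ℕ → ℝ} {ℓ : ℝ} {L : ℕ} (hℓ : 0 < ℓ)
    (hf : ∀ n, n + (k + 1) < L → Δ_[1] ^[k + 1] f n ∈ Set.Icc ℓ (A * ℓ)) (hℓ₁ : ℓ ≤ 1)
    (hL : (ℓ ^ (-(a / (2 * (1 + a))))) ^ 2 ≤ L) :
    ‖∑ n ∈ range L, e (f n)‖ ^ 2 ≤ (4 + 16 * C) * ((L * ℓ ^ (a / (2 * (1 + a)))) ^ 2 +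
      ((L : ℝ) ^ (1 - b / 2) * ℓ ^ (-(a / (2 * (1 + a))))) ^ 2) := by
  set a' := a / (2 * (1 + a)) with ha'
  set ρ := (ℓ ^ (-a')) ^ 2 with hρ
  have hρ_inv : ρ⁻¹ = (ℓ ^ a') ^ 2 := by rw [hρ, ← inv_pow, Real.rpow_neg hℓ.le, inv_inv]
  have hρ₁ : 1 ≤ ρ := one_le_pow₀
    (Real.one_le_rpow_of_pos_of_le_one_of_nonpos hℓ hℓ₁ (neg_nonpos.2 (by positivity)))
  have balance : (ρ * ℓ) ^ a = ρ⁻¹ := by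
    rw [hρ_inv, hρ, ← Real.rpow_mul_natCast hℓ.le, ← Real.rpow_mul_natCast hℓ.le,
      ← Real.rpow_add_one hℓ.ne', ← Real.rpow_mul hℓ.le, ha']
    congr 1
    push_cast
    field_simp
    ring
  have main := htest.norm_sum_e_sq_le hC ha₀ ha hb hℓ hf hρ₁ hL balance
  rwa [hρ_inv, ← mul_pow, ← rpow_one_sub_half_sq L.cast_nonneg hb, ← mul_pow] at main

theorem succ (htest : VanDerCorputTest k A C a b) (hC : 0 ≤ C) (ha₀ : 0 ≤ a) (ha : a ≤ 1 / 2)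
    (hb : b ≤ 1) :
    VanDerCorputTest (k + 1) A (4 + 16 * C) (a / (2 * (1 + a))) (b / 2) := by
  intro f ℓ L hℓ hf
  have main := htest.norm_sum_e_sq_le_of_rpow_sq_le hC ha₀ ha hb hℓ hf
  have ha' : 0 ≤ a / (2 * (1 + a)) := by positivity
  generalize a / (2 * (1 + a)) = a' at *
  set P := L * ℓ ^ a'
  set Q := (L : ℝ) ^ (1 - b / 2) * ℓ ^ (-a')
  have hP : 0 ≤ P := by positivity
  have hQ : 0 ≤ Q := by positivity
  have of_card_le (h : L ≤ P + Q) : ‖∑ n ∈ range L, e (f n)‖ ≤ (4 + 16 * C) * (P + Q) := calc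
    ‖∑ n ∈ range L, e (f n)‖ ≤ L := by simpa using norm_sum_e_le_card (range L) f
    _ ≤ P + Q := h
    _ ≤ (4 + 16 * C) * (P + Q) := le_mul_of_one_le_left (by positivity) (by linarith)
  obtain rfl | hL := L.eq_zero_or_pos
  · exact of_card_le (by simpa using add_nonneg hP hQ)
  rcases le_total 1 ℓ with hℓ₁ | hℓ₁
  · have : (L : ℝ) ≤ P := le_mul_of_one_le_right L.cast_nonneg (Real.one_le_rpow hℓ₁ ha')
    exact of_card_le (by linarith)
  rcases le_total (L : ℝ) ((ℓ ^ (-a')) ^ 2) with hLρ | hρL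
  · have : (L : ℝ) ≤ Q := le_of_sq_le_sq (calc
      (L : ℝ) ^ 2 = L * 1 * L := by ring
      _ ≤ L * (L : ℝ) ^ (1 - b) * (ℓ ^ (-a')) ^ 2 := by
        gcongr
        exact Real.one_le_rpow (mod_cast hL) (by linarith)
      _ = Q ^ 2 := by rw [mul_pow, rpow_one_sub_half_sq L.cast_nonneg hb]) hQ
    exact of_card_le (by linarith)
  refine le_of_sq_le_sq ?_ (by positivity)
  calc ‖∑ n ∈ range L, e (f n)‖ ^ 2 ≤ (4 + 16 * C) * (P ^ 2 + Q ^ 2) := main hℓ₁ hρL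
    _ ≤ (4 + 16 * C) ^ 2 * (P + Q) ^ 2 := by
        gcongr
        · nlinarith
        · nlinarith
    _ = ((4 + 16 * C) * (P + Q)) ^ 2 := by ring

end VanDerCorputTest

theorem four_le_two_pow {k : ℕ} (hk : 2 ≤ k) : (4 : ℝ) ≤ 2 ^ k := calc
  (4 : ℝ) = 2 ^ 2 := by norm_num
  _ ≤ 2 ^ k := pow_le_pow_right₀ one_le_two hk

theorem exists_vanDerCorputTest {A : ℝ} (hA : 0 ≤ A) {k : ℕ} (hk : 2 ≤ k) :
    ∃ C > 0, VanDerCorputTest k A C (1 / (2 ^ k - 2)) (4 / 2 ^ k) := by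
  induction k, hk using Nat.le_induction with
  | base =>
    refine ⟨5 * A + 11, by positivity, ?_⟩
    convert vanDerCorputTest_two hA using 1 <;> norm_num
  | succ k hk ih =>
    obtain ⟨C, hC, htest⟩ := ih
    have four_le := four_le_two_pow hk
    have := htest.succ hC.le (one_div_nonneg.2 (by linarith))
      (one_div_le_one_div_of_le two_pos (by linarith))
      ((div_le_one (by positivity)).2 four_le)
    refine ⟨4 + 16 * C, by positivity, ?_⟩
    convert this using 1
    · have sub_two_ne : (2 : ℝ) ^ k - 2 ≠ 0 := by linarith
      have sub_one_ne : (2 : ℝ) ^ k - 1 ≠ 0 := by linarith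
      rw [pow_succ, one_add_div sub_two_ne,
        show (2 : ℝ) ^ k * 2 - 2 = 2 * (2 ^ k - 1) by ring,
        show (2 : ℝ) ^ k - 2 + 1 = 2 ^ k - 1 by ring]
      field_simp
    · rw [pow_succ, div_div]

/-! ### Exponential sums with monomial phase -/

theorem exists_fwdDiff_iter_eq {k : ℕ} {F : ℕ → ℝ → ℝ} {h u : ℝ} (hh : 0 < h)
    (hF : ∀ i < k, ∀ t ∈ Set.Icc u (u + k * h), HasDerivAt (F i) (F (i + 1) t) t) :
    ∃ ξ ∈ Set.Icc u (u + k * h), Δ_[h] ^[k] (F 0) u = h ^ k * F k ξ := by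
  induction k generalizing F with
  | zero => exact ⟨u, by simp, by simp⟩
  | succ k ih =>
    push_cast at hF ⊢
    obtain ⟨ξ, hξ, hk⟩ := ih (F := fun i ↦ Δ_[h] (F i)) fun i hi t ht ↦
      ((hF i (by lia) (t + h) ⟨by linarith [ht.1], by linarith [ht.2]⟩).comp_add_const t h).sub
        (hF i (by lia) t ⟨ht.1, by linarith [ht.2]⟩)
    have deriv_F t (ht : t ∈ Set.Icc ξ (ξ + h)) : HasDerivAt (F k) (F (k + 1) t) t :=
      hF k k.lt_succ_self t ⟨by linarith [ht.1, hξ.1], by linarith [ht.2, hξ.2]⟩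
    obtain ⟨ζ, hζ, slope⟩ := exists_hasDerivAt_eq_slope (F k) (F (k + 1))
      (lt_add_of_pos_right ξ hh) (fun t ht ↦ (deriv_F t ht).continuousAt.continuousWithinAt)
      fun t ht ↦ deriv_F t (Set.Ioo_subset_Icc_self ht)
    refine ⟨ζ, ⟨by linarith [hζ.1, hξ.1], by linarith [hζ.2, hξ.2]⟩, ?_⟩
    rw [Function.iterate_succ_apply, hk, slope, add_sub_cancel_left, fwdDiff]
    field_simp
    ring

theorem fwdDiff_iter_comp_add_natCast {G : Type*} [AddCommGroup G] (F : ℝ → G) (u : ℝ) (k n : ℕ) :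
    Δ_[1] ^[k] (fun m : ℕ ↦ F (u + m)) n = Δ_[1] ^[k] F (u + n) := by
  simp only [fwdDiff_iter_eq_sum_shift, nsmul_eq_mul, mul_one, Nat.cast_add, Nat.cast_id, add_assoc]

theorem rpow_mem_Icc_of_mem_Icc_one_two {s : ℝ} (hs : s ∈ Set.Icc 1 2) (r : ℝ) :
    s ^ r ∈ Set.Icc (2 ^ (-|r|)) (2 ^ |r|) := by
  have rpow_le {r : ℝ} : s ^ r ≤ 2 ^ |r| :=
    (Real.rpow_le_rpow_of_exponent_le hs.1 (le_abs_self r)).trans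
      (Real.rpow_le_rpow (by linarith [hs.1]) hs.2 (abs_nonneg r))
  refine ⟨?_, rpow_le⟩
  rw [Real.rpow_neg zero_le_two]
  refine inv_le_of_inv_le₀ (Real.rpow_pos_of_pos (by linarith [hs.1]) r) ?_
  rw [← Real.rpow_neg (by linarith [hs.1]), ← abs_neg]
  exact rpow_le

theorem hasDerivAt_descPochhammer_mul_rpow (x c : ℝ) (i : ℕ) {t : ℝ} (ht : 0 < t) :
    HasDerivAt (fun t ↦ x * (descPochhammer ℝ i).eval c * t ^ (c - i))
      (x * (descPochhammer ℝ (i + 1)).eval c * t ^ (c - (i + 1 : ℕ))) t := by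
  refine ((Real.hasDerivAt_rpow_const (.inl ht.ne')).const_mul _).congr_deriv ?_
  simp [descPochhammer_succ_right, sub_sub, mul_assoc]

theorem fwdDiff_iter_monomial_mem_Icc {x c : ℝ} {k : ℕ}
    (hx : 0 < x * (descPochhammer ℝ k).eval c) {M u : ℝ} {n : ℕ} (hM : 0 < M) (hu : M ≤ u)
    (hn : u + n + k ≤ 2 * M) :
    Δ_[1] ^[k] (fun m : ℕ ↦ x * (u + m) ^ c) n ∈
      Set.Icc (x * (descPochhammer ℝ k).eval c * M ^ (c - k) * 2 ^ (-|c - k|))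
        (4 ^ |c - k| * (x * (descPochhammer ℝ k).eval c * M ^ (c - k) * 2 ^ (-|c - k|))) := by
  have hMu : M ≤ u + n := hu.trans (le_add_of_nonneg_right n.cast_nonneg)
  obtain ⟨ξ, hξ, hΔ⟩ := exists_fwdDiff_iter_eq (k := k) (u := u + n)
    (F := fun i t ↦ x * (descPochhammer ℝ i).eval c * t ^ (c - i)) one_pos fun i _ t ht ↦
      hasDerivAt_descPochhammer_mul_rpow x c i (hM.trans_le (hMu.trans ht.1))
  have scaled : ξ / M ∈ Set.Icc 1 2 :=
    ⟨(one_le_div hM).2 (hMu.trans hξ.1), (div_le_iff₀ hM).2 (by linarith [hξ.2])⟩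
  have ratio := rpow_mem_Icc_of_mem_Icc_one_two scaled (c - k)
  have value : Δ_[1] ^[k] (fun m : ℕ ↦ x * (u + m) ^ c) n =
      x * (descPochhammer ℝ k).eval c * M ^ (c - k) * (ξ / M) ^ (c - k) := by
    rw [Real.div_rpow (hM.le.trans (hMu.trans hξ.1)) hM.le,
      fwdDiff_iter_comp_add_natCast (fun t ↦ x * t ^ c)]
    simp only [descPochhammer_zero, Polynomial.eval_one, mul_one, Nat.cast_zero, sub_zero,
      one_pow, one_mul] at hΔ
    rw [hΔ]
    field_simp
  have four_rpow : (4 : ℝ) ^ |c - k| * 2 ^ (-|c - k|) = 2 ^ |c - k| := by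
    rw [show (4 : ℝ) = 2 * 2 by norm_num, Real.mul_rpow zero_le_two zero_le_two,
      Real.rpow_neg zero_le_two, mul_inv_cancel_right₀ (by positivity)]
  rw [value, mul_left_comm, four_rpow]
  exact ⟨by gcongr; exact ratio.1, by gcongr; exact ratio.2⟩

theorem sum_Ioc_eq_sum_range {α : Type*} [AddCommMonoid α] (φ : ℕ → α) (p q : ℕ) :
    ∑ m ∈ Ioc p q, φ m = ∑ n ∈ range (q - p), φ (p + 1 + n) := by
  rw [← Ico_add_one_add_one_eq_Ioc, sum_Ico_eq_sum_range, Nat.add_sub_add_right]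

theorem VanDerCorputTest.norm_sum_e_monomial_le {x c a b C : ℝ} {k : ℕ}
    (htest : VanDerCorputTest k (4 ^ |c - k|) C a b) (hC : 0 ≤ C) (hb : b ≤ 1)
    (hx : x * (descPochhammer ℝ k).eval c ≠ 0) {M : ℝ} (hM : 0 < M) :
    ‖∑ m ∈ Ioc ⌊M⌋₊ ⌊2 * M⌋₊, e (x * m ^ c)‖ ≤
      C * (2 * M * (|x * (descPochhammer ℝ k).eval c| * M ^ (c - k) * 2 ^ (-|c - k|)) ^ a +
        (2 * M) ^ (1 - b) *
          (|x * (descPochhammer ℝ k).eval c| * M ^ (c - k) * 2 ^ (-|c - k|)) ^ (-a)) := by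
  wlog hpos : 0 < x * (descPochhammer ℝ k).eval c generalizing x
  · have := this (x := -x) (by simpa using hx) (by
      rw [neg_mul, Left.neg_pos_iff]
      exact (not_lt.1 hpos).lt_of_ne hx)
    simpa only [neg_mul, norm_sum_e_neg, abs_neg] using this
  set L := ⌊2 * M⌋₊ - ⌊M⌋₊
  have floor_le : (⌊2 * M⌋₊ : ℝ) ≤ 2 * M := Nat.floor_le (by positivity)
  have hL : (L : ℝ) ≤ 2 * M := (Nat.cast_le.2 (Nat.sub_le _ _)).trans floor_le
  have hdiff n (hn : n + k < L) :=
    fwdDiff_iter_monomial_mem_Icc (n := n) hpos hM (Nat.lt_floor_add_one M).le (by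
      have : ((⌊M⌋₊ + 1 + n + k : ℕ) : ℝ) ≤ ⌊2 * M⌋₊ := Nat.cast_le.2 (by lia)
      push_cast at this
      exact this.trans floor_le)
  have main := htest (by positivity) hdiff
  rw [sum_Ioc_eq_sum_range, abs_of_pos hpos]
  push_cast
  refine main.trans ?_
  gcongr

theorem exists_norm_sum_e_monomial_le {c : ℝ} {k : ℕ} (hk : 2 ≤ k)
    (hc : (descPochhammer ℝ k).eval c ≠ 0) :
    ∃ C > 0, ∀ x ≠ 0, ∀ M > 0, ‖∑ m ∈ Ioc ⌊M⌋₊ ⌊2 * M⌋₊, e (x * m ^ c)‖ ≤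
      C * (M * (|x| * M ^ (c - k)) ^ (1 / (2 ^ k - 2) : ℝ) +
        M ^ (1 - 4 / 2 ^ k : ℝ) * (|x| * M ^ (c - k)) ^ (-(1 / (2 ^ k - 2)) : ℝ)) := by
  obtain ⟨C, hC, htest⟩ := exists_vanDerCorputTest (A := 4 ^ |c - k|) (by positivity) hk
  have four_le := four_le_two_pow hk
  have hb : (4 : ℝ) / 2 ^ k ≤ 1 := (div_le_one (by positivity)).2 four_le
  have hb₀ : (0 : ℝ) ≤ 4 / 2 ^ k := by positivity
  generalize (1 / (2 ^ k - 2) : ℝ) = a at *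
  generalize (4 / 2 ^ k : ℝ) = b at *
  set κ : ℝ := |(descPochhammer ℝ k).eval c| * 2 ^ (-|c - k|)
  have hκ : 0 < κ := by positivity
  refine ⟨2 * C * (κ ^ a + κ ^ (-a)), by positivity, fun x hx M hM ↦ ?_⟩
  have hy : 0 ≤ |x| * M ^ (c - k) := by positivity
  have main := htest.norm_sum_e_monomial_le hC.le hb (mul_ne_zero hx hc) hM
  rw [show |x * (descPochhammer ℝ k).eval c| * M ^ (c - k) * 2 ^ (-|c - k|) =
    κ * (|x| * M ^ (c - k)) by rw [abs_mul]; ring] at main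
  generalize |x| * M ^ (c - k) = y at *
  calc ‖∑ m ∈ Ioc ⌊M⌋₊ ⌊2 * M⌋₊, e (x * m ^ c)‖
      ≤ C * (2 * M * (κ * y) ^ a + (2 * M) ^ (1 - b) * (κ * y) ^ (-a)) := main
    _ ≤ C * (2 * M * (κ * y) ^ a + 2 * M ^ (1 - b) * (κ * y) ^ (-a)) := by
        rw [Real.mul_rpow zero_le_two hM.le]
        gcongr
        exact Real.rpow_le_self_of_one_le one_le_two (by linarith)
    _ = 2 * C * (κ ^ a * (M * y ^ a) + κ ^ (-a) * (M ^ (1 - b) * y ^ (-a))) := by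
        rw [Real.mul_rpow hκ.le hy, Real.mul_rpow hκ.le hy]
        ring
    _ ≤ 2 * C * ((κ ^ a + κ ^ (-a)) * (M * y ^ a) +
          (κ ^ a + κ ^ (-a)) * (M ^ (1 - b) * y ^ (-a))) := by
        gcongr
        · exact le_add_of_nonneg_right (by positivity)
        · exact le_add_of_nonneg_left (by positivity)
    _ = 2 * C * (κ ^ a + κ ^ (-a)) * (M * y ^ a + M ^ (1 - b) * y ^ (-a)) := by ring

/-! ### The Type I estimate -/

theorem exists_norm_sum_e_mul_rpow_le {c : ℝ} (hc₀ : 0 ≤ c) {k : ℕ} (hk : 2 ≤ k)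
    (hc : (descPochhammer ℝ k).eval c ≠ 0) :
    ∃ C > 0, ∀ x ≠ 0, ∀ M > 0, ∀ N > 0, ∀ t ∈ Set.Icc N (2 * N),
      ‖∑ m ∈ Ioc ⌊M⌋₊ ⌊2 * M⌋₊, e (x * t ^ c * m ^ c)‖ ≤
        C * (M * (|x| * N ^ c * M ^ (c - k)) ^ (1 / (2 ^ k - 2) : ℝ) +
          M ^ (1 - 4 / 2 ^ k : ℝ) * (|x| * N ^ c * M ^ (c - k)) ^ (-(1 / (2 ^ k - 2)) : ℝ)) := by
  obtain ⟨C, hC, hsum⟩ := exists_norm_sum_e_monomial_le hk hc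
  have ha : (0 : ℝ) ≤ 1 / (2 ^ k - 2) := one_div_nonneg.2 (by linarith [four_le_two_pow hk])
  generalize (1 / (2 ^ k - 2) : ℝ) = a at *
  generalize (1 - 4 / 2 ^ k : ℝ) = d at *
  refine ⟨C * (2 ^ c) ^ a, by positivity, fun x hx M hM N hN t ht ↦ ?_⟩
  have ht₀ : 0 < t := hN.trans_le ht.1
  have one_le : 1 ≤ (2 : ℝ) ^ c := Real.one_le_rpow one_le_two hc₀
  have main := hsum (x * t ^ c) (by positivity) M hM
  rw [abs_mul, abs_of_pos (Real.rpow_pos_of_pos ht₀ c)] at main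
  have hy : 0 < |x| * N ^ c * M ^ (c - k) := by positivity
  have le_ty : |x| * N ^ c * M ^ (c - k) ≤ |x| * t ^ c * M ^ (c - k) := by
    gcongr
    exact ht.1
  have ty_le : |x| * t ^ c * M ^ (c - k) ≤ 2 ^ c * (|x| * N ^ c * M ^ (c - k)) := calc
    |x| * t ^ c * M ^ (c - k) ≤ |x| * (2 * N) ^ c * M ^ (c - k) := by
      gcongr
      exact ht.2
    _ = 2 ^ c * (|x| * N ^ c * M ^ (c - k)) := by
      rw [Real.mul_rpow zero_le_two hN.le]
      ring
  generalize |x| * N ^ c * M ^ (c - k) = y at *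
  generalize |x| * t ^ c * M ^ (c - k) = y' at *
  calc ‖∑ m ∈ Ioc ⌊M⌋₊ ⌊2 * M⌋₊, e (x * t ^ c * m ^ c)‖
      ≤ C * (M * y' ^ a + M ^ d * y' ^ (-a)) := main
    _ ≤ C * (M * ((2 ^ c) ^ a * y ^ a) + M ^ d * ((2 ^ c) ^ a * y ^ (-a))) := by
        gcongr
        · exact (Real.rpow_le_rpow (hy.le.trans le_ty) ty_le ha).trans_eq
            (Real.mul_rpow (by positivity) hy.le)
        · exact (Real.rpow_le_rpow_of_nonpos hy le_ty (neg_nonpos.2 ha)).trans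
            (le_mul_of_one_le_left (by positivity) (Real.one_le_rpow one_le ha))
    _ = C * (2 ^ c) ^ a * (M * y ^ a + M ^ d * y ^ (-a)) := by ring

theorem exists_norm_sum_sum_mul_e_le {c : ℝ} (hc₀ : 0 ≤ c) {k : ℕ} (hk : 2 ≤ k)
    (hc : (descPochhammer ℝ k).eval c ≠ 0) :
    ∃ C > 0, ∀ x ≠ 0, ∀ M > 0, ∀ N > 0, ∀ D, ∀ b : ℕ → ℂ, (∀ n, ‖b n‖ ≤ D) →
      ‖∑ m ∈ Ioc ⌊M⌋₊ ⌊2 * M⌋₊, ∑ n ∈ Ioc ⌊N⌋₊ ⌊2 * N⌋₊, b n * e (x * m ^ c * n ^ c)‖ ≤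
        C * D * N * (M * (|x| * N ^ c * M ^ (c - k)) ^ (1 / (2 ^ k - 2) : ℝ) +
          M ^ (1 - 4 / 2 ^ k : ℝ) * (|x| * N ^ c * M ^ (c - k)) ^ (-(1 / (2 ^ k - 2)) : ℝ)) := by
  obtain ⟨C, hC, hsum⟩ := exists_norm_sum_e_mul_rpow_le hc₀ hk hc
  refine ⟨2 * C, by positivity, fun x hx M hM N hN D b hb ↦ ?_⟩
  have hD : 0 ≤ D := (norm_nonneg _).trans (hb 0)
  have inner_le n (hn : n ∈ Ioc ⌊N⌋₊ ⌊2 * N⌋₊) := hsum x hx M hM N hN n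
    ⟨(Nat.lt_of_floor_lt (mem_Ioc.1 hn).1).le,
      (Nat.le_floor_iff (by positivity)).1 (mem_Ioc.1 hn).2⟩
  set T := M * (|x| * N ^ c * M ^ (c - k)) ^ (1 / (2 ^ k - 2) : ℝ) +
    M ^ (1 - 4 / 2 ^ k : ℝ) * (|x| * N ^ c * M ^ (c - k)) ^ (-(1 / (2 ^ k - 2)) : ℝ)
  calc ‖∑ m ∈ Ioc ⌊M⌋₊ ⌊2 * M⌋₊, ∑ n ∈ Ioc ⌊N⌋₊ ⌊2 * N⌋₊, b n * e (x * m ^ c * n ^ c)‖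
      = ‖∑ n ∈ Ioc ⌊N⌋₊ ⌊2 * N⌋₊, b n * ∑ m ∈ Ioc ⌊M⌋₊ ⌊2 * M⌋₊, e (x * n ^ c * m ^ c)‖ := by
        rw [sum_comm]
        simp only [mul_sum, mul_right_comm x]
    _ ≤ ∑ _ ∈ Ioc ⌊N⌋₊ ⌊2 * N⌋₊, D * (C * T) :=
        norm_sum_le_of_le _ fun _ hn ↦ (norm_mul_le _ _).trans
          (mul_le_mul (hb _) (inner_le _ hn) (norm_nonneg _) hD)
    _ = #(Ioc ⌊N⌋₊ ⌊2 * N⌋₊) * (D * (C * T)) := by rw [sum_const, nsmul_eq_mul]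
    _ ≤ 2 * N * (D * (C * T)) := by
        gcongr
        rw [Nat.card_Ioc]
        exact (Nat.cast_le.2 (Nat.sub_le _ _)).trans (Nat.floor_le (by positivity))
    _ = 2 * C * D * N * T := by ring

section ParameterRange

variable {c η δ D₁ D₂ D₃ X x M N : ℝ}

theorem rpow_mul_rpow_sub (c r : ℝ) (hM : 0 < M) (hN : 0 ≤ N) :
    N ^ c * M ^ (c - r) = (M * N) ^ c * M ^ (-r) := by
  rw [sub_eq_add_neg, Real.rpow_add hM, Real.mul_rpow hM.le hN]
  ring

theorem abs_mul_rpow_mul_rpow_le (hc : 0 ≤ c) (hδ : δ = c / 2 - 1 + η) (hD₃ : 0 < D₃)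
    (hX : 0 < X) (hx : |x| ≤ X ^ (2 * η)) (hM : 0 < M) (hN : 0 < N) (hMN : M * N ≤ D₂ * X)
    (hXM : D₃ * X ^ (1 / 2 + 4 * δ) ≤ M) :
    |x| * N ^ c * M ^ (c - 4) ≤ D₂ ^ c * D₃ ^ (-4 : ℝ) * X ^ (-(14 * δ)) := by
  have hD₂ : 0 < D₂ := pos_of_mul_pos_left ((mul_pos hM hN).trans_le hMN) hX.le
  calc |x| * N ^ c * M ^ (c - 4)
      = |x| * ((M * N) ^ c * M ^ (-4 : ℝ)) := by rw [mul_assoc, rpow_mul_rpow_sub c 4 hM hN.le]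
    _ ≤ X ^ (2 * η) * ((D₂ * X) ^ c * (D₃ * X ^ (1 / 2 + 4 * δ)) ^ (-4 : ℝ)) := by
        gcongr ?_ * (?_ ^ c * ?_)
        exact Real.rpow_le_rpow_of_nonpos (by positivity) hXM (by norm_num)
    _ = D₂ ^ c * D₃ ^ (-4 : ℝ) * (X ^ (2 * η) * X ^ c * X ^ ((1 / 2 + 4 * δ) * -4)) := by
        rw [Real.mul_rpow hD₂.le hX.le, Real.mul_rpow hD₃.le (by positivity), ← Real.rpow_mul hX.le]
        ring
    _ = D₂ ^ c * D₃ ^ (-4 : ℝ) * X ^ (-(14 * δ)) := by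
        rw [← Real.rpow_add hX, ← Real.rpow_add hX, hδ]
        ring_nf

theorem le_rpow_mul_abs_mul_rpow_mul_rpow (hc : 0 ≤ c) (hδ : δ + η / 14 ≤ 1 / 28) (hD₁ : 0 < D₁)
    (hX : 1 ≤ X) (hx : X ^ (1 - c - η) ≤ |x|) (hM : 0 < M) (hN : 1 ≤ N) (hXMN : D₁ * X ≤ M * N)
    (hMN : M * N ≤ D₂ * X) :
    D₁ ^ c * D₂ ^ (-(1 / 2) : ℝ) * X ^ (14 * δ) ≤
      M ^ (7 / 2 : ℝ) * (|x| * N ^ c * M ^ (c - 4)) := by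
  have hX₀ : 0 < X := by linarith
  have hMX : M ≤ D₂ * X := (le_mul_of_one_le_right hM.le hN).trans hMN
  have hD₂ : 0 < D₂ := pos_of_mul_pos_left (hM.trans_le hMX) hX₀.le
  calc D₁ ^ c * D₂ ^ (-(1 / 2) : ℝ) * X ^ (14 * δ)
      ≤ D₁ ^ c * D₂ ^ (-(1 / 2) : ℝ) * X ^ (1 - c - η + c + -(1 / 2)) := by
        gcongr
        linarith
    _ = X ^ (1 - c - η) * ((D₁ * X) ^ c * (D₂ * X) ^ (-(1 / 2) : ℝ)) := by
        rw [Real.rpow_add hX₀, Real.rpow_add hX₀, Real.mul_rpow hD₁.le hX₀.le,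
          Real.mul_rpow hD₂.le hX₀.le]
        ring
    _ ≤ |x| * ((M * N) ^ c * M ^ (-(1 / 2) : ℝ)) := by
        gcongr ?_ * (?_ ^ c * ?_)
        exact Real.rpow_le_rpow_of_nonpos hM hMX (by norm_num)
    _ = M ^ (7 / 2 : ℝ) * (|x| * N ^ c * M ^ (c - 4)) := by
        rw [mul_assoc |x|, rpow_mul_rpow_sub c 4 hM (zero_le_one.trans hN),
          show (-(1 / 2) : ℝ) = 7 / 2 + -4 by norm_num, Real.rpow_add hM]
        ring

theorem rpow_one_div_le_of_le_mul_rpow {A y r : ℝ} (hA : 0 ≤ A) (hX : 0 < X) (hr : 0 < r)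
    (hy : 0 ≤ y) (h : y ≤ A * X ^ (-(r * δ))) : y ^ (1 / r) ≤ A ^ (1 / r) * X ^ (-δ) := calc
  y ^ (1 / r) ≤ (A * X ^ (-(r * δ))) ^ (1 / r) := by gcongr
  _ = A ^ (1 / r) * X ^ (-δ) := by
    rw [Real.mul_rpow hA (by positivity), ← Real.rpow_mul hX.le]
    field_simp

theorem rpow_mul_rpow_neg_le_of_mul_rpow_le {B y r d : ℝ} (hB : 0 < B) (hX : 0 < X) (hr : 0 < r)
    (hM : 0 < M) (hy : 0 < y) (h : B * X ^ (r * δ) ≤ M ^ (r * d) * y) :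
    M ^ (1 - d) * y ^ (-(1 / r)) ≤ M * (B ^ (-(1 / r)) * X ^ (-δ)) := calc
  M ^ (1 - d) * y ^ (-(1 / r)) = M * (M ^ (r * d) * y) ^ (-(1 / r)) := by
    rw [Real.mul_rpow (by positivity) hy.le, ← Real.rpow_mul hM.le,
      show r * d * -(1 / r) = -d by field_simp, ← mul_assoc, sub_eq_add_neg, Real.rpow_add hM,
      Real.rpow_one]
  _ ≤ M * (B * X ^ (r * δ)) ^ (-(1 / r)) := mul_le_mul_of_nonneg_left
    (Real.rpow_le_rpow_of_nonpos (by positivity) h (neg_nonpos.2 (one_div_nonneg.2 hr.le))) hM.le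
  _ = M * (B ^ (-(1 / r)) * X ^ (-δ)) := by
    rw [Real.mul_rpow hB.le (by positivity), ← Real.rpow_mul hX.le]
    field_simp

end ParameterRange

theorem descPochhammer_eval_ne_zero {c : ℝ} {k : ℕ} (hc : ∀ i : ℕ, i < k → c ≠ i) :
    (descPochhammer ℝ k).eval c ≠ 0 := by
  rw [descPochhammer_eval_eq_prod_range, prod_ne_zero_iff]
  exact fun i hi ↦ sub_ne_zero.2 (hc i (mem_range.1 hi))

theorem stmt16_general {c η δ D₁ D₂ D₃ : ℝ} (hc₀ : 0 ≤ c) (hc : ∀ i : ℕ, i < 4 → c ≠ i)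
    (hδ : δ = c / 2 - 1 + η) (hδη : δ + η / 14 ≤ 1 / 28) (hD₁ : 0 < D₁) (hD₂ : 0 < D₂)
    (hD₃ : 0 < D₃) :
    ∃ C > 0, ∀ X ≥ 1, ∀ x, X ^ (1 - c - η) ≤ |x| → |x| ≤ X ^ (2 * η) →
      ∀ M N, 1 ≤ N → D₁ * X ≤ M * N → M * N ≤ D₂ * X → D₃ * X ^ (1 / 2 + 4 * δ) ≤ M →
      ∀ D, ∀ b : ℕ → ℂ, (∀ n, ‖b n‖ ≤ D) →
        ‖∑ m ∈ Ioc ⌊M⌋₊ ⌊2 * M⌋₊, ∑ n ∈ Ioc ⌊N⌋₊ ⌊2 * N⌋₊, b n * e (x * m ^ c * n ^ c)‖ ≤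
          C * D * X ^ (1 - δ) := by
  obtain ⟨C, hC, hsum⟩ := exists_norm_sum_sum_mul_e_le hc₀ (k := 4) (by norm_num)
    (descPochhammer_eval_ne_zero hc)
  set A := D₂ ^ c * D₃ ^ (-4 : ℝ)
  set B := D₁ ^ c * D₂ ^ (-(1 / 2) : ℝ)
  refine ⟨C * D₂ * (A ^ (1 / 14 : ℝ) + B ^ (-(1 / 14) : ℝ)), by positivity, ?_⟩
  intro X hX x hx₁ hx₂ M N hN hXMN hMN hXM D b hb
  have hX₀ : 0 < X := by linarith
  have hM : 0 < M := lt_of_lt_of_le (by positivity) hXM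
  have hN₀ : 0 < N := by linarith
  have hD : 0 ≤ D := (norm_nonneg _).trans (hb 0)
  have hx : x ≠ 0 := abs_pos.1 (lt_of_lt_of_le (by positivity) hx₁)
  have upper := abs_mul_rpow_mul_rpow_le hc₀ hδ hD₃ hX₀ hx₂ hM hN₀ hMN hXM
  have lower := le_rpow_mul_abs_mul_rpow_mul_rpow hc₀ hδη hD₁ hX hx₁ hM hN hXMN hMN
  have main := hsum x hx M hM N hN₀ D b hb
  norm_num only at main
  set y := |x| * N ^ c * M ^ (c - 4)
  have hy : 0 < y := by positivity
  have first_le : y ^ (1 / 14 : ℝ) ≤ A ^ (1 / 14 : ℝ) * X ^ (-δ) :=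
    rpow_one_div_le_of_le_mul_rpow (by positivity) hX₀ (by norm_num) hy.le upper
  have second_le : M ^ (3 / 4 : ℝ) * y ^ (-(1 / 14) : ℝ) ≤
      M * (B ^ (-(1 / 14) : ℝ) * X ^ (-δ)) := by
    have := rpow_mul_rpow_neg_le_of_mul_rpow_le (r := 14) (d := 1 / 4) (by positivity) hX₀
      (by norm_num) hM hy (lower.trans_eq (by norm_num))
    rwa [show (1 - 1 / 4 : ℝ) = 3 / 4 by norm_num] at this
  calc ‖∑ m ∈ Ioc ⌊M⌋₊ ⌊2 * M⌋₊, ∑ n ∈ Ioc ⌊N⌋₊ ⌊2 * N⌋₊, b n * e (x * m ^ c * n ^ c)‖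
      ≤ C * D * N * (M * y ^ (1 / 14 : ℝ) + M ^ (3 / 4 : ℝ) * y ^ (-(1 / 14) : ℝ)) := main
    _ ≤ C * D * N * (M * (A ^ (1 / 14 : ℝ) * X ^ (-δ)) +
          M * (B ^ (-(1 / 14) : ℝ) * X ^ (-δ))) := by gcongr
    _ = C * (A ^ (1 / 14 : ℝ) + B ^ (-(1 / 14) : ℝ)) * D * X ^ (-δ) * (M * N) := by ring
    _ ≤ C * (A ^ (1 / 14 : ℝ) + B ^ (-(1 / 14) : ℝ)) * D * X ^ (-δ) * (D₂ * X) := by gcongr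
    _ = C * D₂ * (A ^ (1 / 14 : ℝ) + B ^ (-(1 / 14) : ℝ)) * D * X ^ (1 - δ) := by
        rw [sub_eq_neg_add, Real.rpow_add_one hX₀.ne']
        ring

theorem eventually_log_pow_le_rpow (k : ℕ) {r : ℝ} (hr : 0 < r) :
    ∀ᶠ X : ℝ in Filter.atTop, Real.log X ^ k ≤ X ^ r := by
  filter_upwards [(isLittleO_log_rpow_rpow_atTop k hr).eventuallyLE,
    Filter.eventually_ge_atTop 0] with X hX hX₀
  rw [Real.rpow_natCast, Real.norm_of_nonneg (Real.rpow_nonneg hX₀ r)] at hX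
  exact (Real.le_norm_self _).trans hX

/-- Lemma 2.14, Type I estimate: for `2 < c < 37/18`, sufficiently small
`η > 0`, `δ = c/2 − 1 + η`, `τ ≤ |x| ≤ K` (where `τ = X^{1−c−η}`, `K = (log X)⁵`),
`MN ≍ X`, `M ≫ X^{1−72δ/7}` and bounded coefficients `b_n`, one has
`Σ_{m∼M} Σ_{n∼N} b_n e(x m^c n^c) ≪_{c,η} X^{1−δ}`. -/
theorem stmt16 (c : ℝ) (hc1 : 2 < c) (hc2 : c < 37 / 18) :
    ∃ η₀ > 0, ∀ η : ℝ, 0 < η → η < η₀ → ∀ δ : ℝ, δ = c / 2 - 1 + η →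
    ∀ D₁ D₂ D₃ D₄ : ℝ, 0 < D₁ → 0 < D₂ → 0 < D₃ → 0 < D₄ →
    ∃ C > 0, ∃ X₀ : ℝ, ∀ X ≥ X₀, ∀ τ K : ℝ,
      τ = X ^ (1 - c - η) → K = (Real.log X) ^ 5 →
    ∀ x : ℝ, τ ≤ |x| → |x| ≤ K →
    ∀ M N : ℝ, 1 ≤ M → 1 ≤ N → D₁ * X ≤ M * N → M * N ≤ D₂ * X →
      D₃ * X ^ (1 - 72 * δ / 7) ≤ M →
    ∀ b : ℕ → ℂ, (∀ n, ‖b n‖ ≤ D₄) →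
      ‖∑ m ∈ Finset.Ioc ⌊M⌋₊ ⌊2 * M⌋₊, ∑ n ∈ Finset.Ioc ⌊N⌋₊ ⌊2 * N⌋₊,
          b n * e (x * (m : ℝ) ^ c * (n : ℝ) ^ c)‖ ≤ C * X ^ (1 - δ) := by
  refine ⟨1 / 150, by norm_num, ?_⟩
  intro η hη hη₀ δ hδ D₁ D₂ D₃ D₄ hD₁ hD₂ hD₃ hD₄
  have hc (i : ℕ) (_ : i < 4) : c ≠ i := by
    rintro rfl
    have : 2 < i := by exact_mod_cast hc1
    have : i < 3 := by exact_mod_cast (by linarith : (i : ℝ) < 3)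
    lia
  obtain ⟨C, hC, hbound⟩ :=
    stmt16_general (by linarith) hc hδ (by linarith) hD₁ hD₂ hD₃
  obtain ⟨X₀, hX₀⟩ := Filter.eventually_atTop.1
    ((eventually_log_pow_le_rpow 5 (mul_pos two_pos hη)).and (Filter.eventually_ge_atTop 1))
  refine ⟨C * D₄, mul_pos hC hD₄, X₀, ?_⟩
  rintro X hX _ _ rfl rfl x hx hx' M N - hN hXMN hMN hXM b hb
  obtain ⟨log_le, one_le⟩ := hX₀ X hX
  have exponent_le : 1 / 2 + 4 * δ ≤ 1 - 72 * δ / 7 := by linarith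
  refine hbound X one_le x hx (hx'.trans log_le) M N hN hXMN hMN ?_ D₄ b hb
  exact (by gcongr : D₃ * X ^ (1 / 2 + 4 * δ) ≤ D₃ * X ^ (1 - 72 * δ / 7)).trans hXM
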